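/- arXiv:2208.05078 — 2 statements merged into one kernel-verified Lean document; each statement's English description precedes it below -/
import Mathlib

section
/- For positive integers R, s, N satisfying R ≥ 2√(3(s−1)N)/π, |{𝐤 ∈ ℕ₀^s ∖ {0} : ‖𝛋‖₁ ≤ N + R and ‖⌈𝛋⌉‖₁ > R}| < C(R + s, s − 1) · N · exp(π√(sN/3)), where C(·,·) denotes a binomial coefficient. -/
open MeasureTheory ProbabilityTheory
open scoped ENNReal

namespace MedianQMC


/-- The set of 0-indexed positions of nonzero binary digits of `k`
(so `κ`, the 1-indexed set from the paper, is the image of this under `·+1`). -/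
def bitFinset (k : ℕ) : Finset ℕ := (Finset.range (k+1)).filter (fun i => k.testBit i)

/-- `‖κ‖₁ = ∑_{ℓ∈κ} ℓ` for the 1-indexed digit set `κ` of `k`. -/
def norm1 (k : ℕ) : ℕ := ∑ i ∈ bitFinset k, (i+1)

/-- `‖𝛋‖₁`. -/
def norm1Vec {s : ℕ} (k : Fin s → ℕ) : ℕ := ∑ j, norm1 (k j)

/-- `‖𝛋‖₀`, the total number of nonzero binary digits. -/
def norm0Vec {s : ℕ} (k : Fin s → ℕ) : ℕ := ∑ j, (bitFinset (k j)).card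

/-- `‖⌈𝛋⌉‖₁`; note `⌈κ_j⌉ = Nat.size (k j)`. -/
def ceilSum {s : ℕ} (k : Fin s → ℕ) : ℕ := ∑ j, Nat.size (k j)

/-- the support `s(𝐤)`. -/
def supp {s : ℕ} (k : Fin s → ℕ) : Finset (Fin s) := Finset.univ.filter (fun j => k j ≠ 0)

/-- Row `i` (0-indexed; paper row `i+1`) of `C j`, as a vector, `0` if out of range. -/
def rowOf {s m : ℕ} (C : Fin s → Matrix (Fin m) (Fin m) (ZMod 2)) (j : Fin s) (i : ℕ) :
    Fin m → ZMod 2 :=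
  fun c => if h : i < m then C j ⟨i, h⟩ c else 0

/-- The row space of the stacked matrix `C^{(q)}` consisting of the first `q j` rows of each `C j`. -/
def rowSpace {s m : ℕ} (C : Fin s → Matrix (Fin m) (Fin m) (ZMod 2)) (q : Fin s → ℕ) :
    Submodule (ZMod 2) (Fin m → ZMod 2) :=
  Submodule.span (ZMod 2) {v | ∃ j i, i < q j ∧ v = rowOf C j i}

/-- The rank of the stacked matrix `C^{(q)}`. -/
noncomputable def stackRank {s m : ℕ} (C : Fin s → Matrix (Fin m) (Fin m) (ZMod 2))
    (q : Fin s → ℕ) : ℕ :=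
  Module.finrank (ZMod 2) (rowSpace C q)

/-- `C₁,…,C_s` generate a digital `(t,m,s)`-net in base 2: every stacked matrix `C^{(q)}`
with `∑ q j = m - t` has full row rank `m - t`.  (Note each row of `C^{(q)}` is a genuine
row since `q j ≤ m - t ≤ m` automatically.) -/
def IsDigitalNet {s m : ℕ} (t : ℕ) (C : Fin s → Matrix (Fin m) (Fin m) (ZMod 2)) : Prop :=
  ∀ q : Fin s → ℕ, (∑ j, q j) = m - t → stackRank C q = m - t

/-- structural constraints of a linear scramble matrix with rows indexed by `ℕ`
(0-indexed; paper row `ℓ` is row `ℓ-1` here): ones on the diagonal, zeros above it. -/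
def IsLinearScramble {s m : ℕ} (M : Fin s → ℕ → Fin m → ZMod 2) : Prop :=
  ∀ j : Fin s, ∀ r : Fin m, M j (r : ℕ) r = 1 ∧ ∀ ℓ : ℕ, ℓ < (r : ℕ) → M j ℓ r = 0

/-- The condition `∑_{j=1}^s k⃗_jᵀ M_j C_j = 0`. -/
def ZeroCond {s m : ℕ} (C : Fin s → Matrix (Fin m) (Fin m) (ZMod 2))
    (M : Fin s → ℕ → Fin m → ZMod 2) (k : Fin s → ℕ) : Prop :=
  ∀ c : Fin m, (∑ j, ∑ i ∈ bitFinset (k j), ∑ r : Fin m, M j i r * C j r c) = 0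

/-- index type for the free (random) entries of the scramble matrices: entries strictly
below the diagonal, i.e. with column index `< ` row index. -/
def FreeIdx (s m : ℕ) : Type := {p : Fin s × ℕ × Fin m // (p.2.2 : ℕ) < p.2.1}

/-- index type for all random bits of a scramble-with-digital-shift. -/
def ScrIdx (s m : ℕ) : Type := FreeIdx s m ⊕ (Fin s × ℕ)

variable {Ω : Type*}

/-- the family of free entries of the random matrices. -/
def freeVar {s m : ℕ} (M : Ω → Fin s → ℕ → Fin m → ZMod 2) : FreeIdx s m → Ω → ZMod 2 :=
  fun p ω => M ω p.1.1 p.1.2.1 p.1.2.2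

/-- the family of all random bits of a scramble-with-digital-shift. -/
def scrVar {s m : ℕ} (M : Ω → Fin s → ℕ → Fin m → ZMod 2)
    (D : Ω → Fin s → ℕ → ZMod 2) : ScrIdx s m → Ω → ZMod 2
  | Sum.inl p => freeVar M p
  | Sum.inr q => fun ω => D ω q.1 q.2

/-- `x = Σ_{ℓ≥1} 2^{−ℓ} y_ℓ` (here `y` is 0-indexed). -/
noncomputable def coordI (y : ℕ → ZMod 2) : ℝ := ∑' ℓ : ℕ, ((y ℓ).val : ℝ) / 2 ^ (ℓ + 1)

/-- finite-precision coordinate `x = Σ_{ℓ=1}^E 2^{−ℓ} y_ℓ`. -/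
noncomputable def coordF (E : ℕ) (y : ℕ → ZMod 2) : ℝ :=
  ∑ ℓ ∈ Finset.range E, ((y ℓ).val : ℝ) / 2 ^ (ℓ + 1)

/-- digit string `M_j C_j ī + D_j` of the scrambled point `x_{ij}`. -/
def scrDigits {s m : ℕ} (C : Fin s → Matrix (Fin m) (Fin m) (ZMod 2))
    (M : Fin s → ℕ → Fin m → ZMod 2) (D : Fin s → ℕ → ZMod 2) (i : ℕ) (j : Fin s) :
    ℕ → ZMod 2 :=
  fun ℓ => (∑ r : Fin m, M j ℓ r * ∑ c : Fin m, C j r c *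
      (if i.testBit (c : ℕ) then 1 else 0)) + D j ℓ

/-- infinite-precision estimator `μ̂_∞ = 2^{-m} ∑_{i=0}^{2^m-1} f(x_i)`. -/
noncomputable def estInf {s m : ℕ} (f : (Fin s → ℝ) → ℝ)
    (C : Fin s → Matrix (Fin m) (Fin m) (ZMod 2))
    (M : Fin s → ℕ → Fin m → ZMod 2) (D : Fin s → ℕ → ZMod 2) : ℝ :=
  ((2 : ℝ) ^ m)⁻¹ * ∑ i ∈ Finset.range (2 ^ m), f (fun j => coordI (scrDigits C M D i j))

/-- precision-`E` estimator `μ̂_E`. -/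
noncomputable def estE {s m : ℕ} (E : ℕ) (f : (Fin s → ℝ) → ℝ)
    (C : Fin s → Matrix (Fin m) (Fin m) (ZMod 2))
    (M : Fin s → ℕ → Fin m → ZMod 2) (D : Fin s → ℕ → ZMod 2) : ℝ :=
  ((2 : ℝ) ^ m)⁻¹ * ∑ i ∈ Finset.range (2 ^ m), f (fun j => coordF E (scrDigits C M D i j))

/-- half-open unit cube `[0,1)^s`. -/
def cube (s : ℕ) : Set (Fin s → ℝ) := Set.univ.pi fun _ => Set.Ico (0:ℝ) 1

/-- closed unit cube `[0,1]^s`. -/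
def cubeC (s : ℕ) : Set (Fin s → ℝ) := Set.univ.pi fun _ => Set.Icc (0:ℝ) 1

/-- `ℓ`-th (0-indexed; paper `ℓ+1`) binary digit of `x ∈ [0,1)`, using the expansion ending
in zeros for dyadic rationals. -/
noncomputable def rdigit (x : ℝ) (i : ℕ) : ℕ := (⌊x * 2 ^ (i+1)⌋).toNat % 2

/-- Walsh function `wal_k`. -/
noncomputable def walsh (k : ℕ) (x : ℝ) : ℝ := (-1 : ℝ) ^ (∑ i ∈ bitFinset k, rdigit x i)

/-- multivariate Walsh function `wal_𝐤`. -/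
noncomputable def walshVec {s : ℕ} (k : Fin s → ℕ) (x : Fin s → ℝ) : ℝ :=
  ∏ j, walsh (k j) (x j)

/-- Walsh coefficient `f̂(𝐤)`. -/
noncomputable def fhat {s : ℕ} (f : (Fin s → ℝ) → ℝ) (k : Fin s → ℕ) : ℝ :=
  ∫ x in cube s, f x * walshVec k x

/-- the sign `(−1)^{Σ_j k⃗_jᵀ D_j}`. -/
noncomputable def walshSign {s : ℕ} (D : Fin s → ℕ → ZMod 2) (k : Fin s → ℕ) : ℝ :=
  (-1 : ℝ) ^ (∑ j, ∑ i ∈ bitFinset (k j), (D j i).val)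

/-- the constant `λ = 3 log(2)²/π²`. -/
noncomputable def lam : ℝ := 3 * Real.log 2 ^ 2 / Real.pi ^ 2

/-- the `i`-th smallest (0-indexed) of the values `v`. -/
noncomputable def orderStat {n : ℕ} (v : Fin n → ℝ) (i : ℕ) : ℝ :=
  (((List.ofFn v).mergeSort fun a b => @decide (a ≤ b) (Classical.propDecidable _)).getD i 0)

end MedianQMC

namespace MedianQMC

open Finset in
theorem norm1_add (n k : ℕ) (hk : k < 2 ^ n) : norm1 (2 ^ n + k) = (n + 1) + norm1 k := by
  have h : bitFinset (2 ^ n + k) = insert n (bitFinset k) := by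
    have hn : n < 2 ^ n := Nat.lt_two_pow_self
    have key : ∀ i, (2 ^ n + k).testBit i = if i < n then k.testBit i else decide (i = n) := by
      intro i
      have := Nat.testBit_two_pow_mul_add 1 hk i
      rw [mul_one] at this
      rw [this]
      split_ifs with h
      · rfl
      · rw [Bool.eq_iff_iff, Nat.testBit_one_eq_true_iff_self_eq_zero, decide_eq_true_iff]
        omega
    have hge : ∀ m i : ℕ, m.testBit i = true → i < m + 1 := by
      intro m i h
      by_contra hc
      have h1 : m < 2 ^ i := lt_of_lt_of_le Nat.lt_two_pow_self (Nat.pow_le_pow_right (by norm_num) (by omega))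
      rw [Nat.testBit_lt_two_pow h1] at h
      simp at h
    have hk2 : ∀ i, k.testBit i = true → i < n := by
      intro i h
      by_contra hc
      have h1 : k < 2 ^ i := lt_of_lt_of_le hk (Nat.pow_le_pow_right (by norm_num) (by omega))
      rw [Nat.testBit_lt_two_pow h1] at h
      simp at h
    ext i
    simp only [bitFinset, mem_filter, mem_range, mem_insert]
    constructor
    · rintro ⟨_, h⟩
      rw [key] at h
      split_ifs at h with h2
      · exact Or.inr ⟨hge _ _ h, h⟩
      · left; simpa using h
    · intro h
      have : (2 ^ n + k).testBit i = true := by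
        rw [key]
        rcases h with h | ⟨_, h⟩
        · simp [h]
        · simp [hk2 i h, h]
      exact ⟨hge _ _ this, this⟩
  have hnot : n ∉ bitFinset k := by
    simp [bitFinset, Nat.testBit_lt_two_pow hk]
  rw [norm1, h, sum_insert hnot, norm1]

open Finset in
theorem sum_pow_norm1 (x : ℝ) (n : ℕ) :
    ∑ k ∈ range (2 ^ n), x ^ norm1 k = ∏ i ∈ range n, (1 + x ^ (i + 1)) := by
  induction n with
  | zero => simp [norm1, bitFinset]
  | succ n ih =>
    rw [pow_succ, mul_two, sum_range_add, prod_range_succ, ih, mul_add, mul_one]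
    congr 1
    rw [← ih, sum_mul]
    refine sum_congr rfl fun k hk => ?_
    rw [norm1_add n k (mem_range.1 hk), pow_add, mul_comm]

open Finset in
theorem fiber_sum (x P : ℝ) (hx : 0 ≤ x) (hP : ∀ n : ℕ, ∏ i ∈ range n, (1 + x ^ (i + 1)) ≤ P) (q : ℕ) :
    ∑ k ∈ (range (2 ^ q)).filter (fun k => Nat.size k = q), x ^ norm1 k ≤ x ^ q * P := by
  cases q with
  | zero =>
    have := hP 0
    simpa [norm1, bitFinset, Finset.filter_singleton] using this
  | succ n =>
    have : (range (2 ^ (n + 1))).filter (fun k => Nat.size k = n + 1) = Ico (2 ^ n) (2 ^ (n + 1)) := by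
      ext k
      simp only [mem_filter, mem_range, mem_Ico]
      have h1 := @Nat.size_le k (n + 1)
      have h2 := @Nat.lt_size n k
      constructor
      · rintro ⟨h3, h4⟩; exact ⟨h2.1 (by omega), h3⟩
      · rintro ⟨h3, h4⟩
        have := h1.2 h4
        have := h2.2 h3
        exact ⟨h4, by omega⟩
    rw [this, sum_Ico_eq_sum_range, show 2 ^ (n + 1) - 2 ^ n = 2 ^ n by rw [pow_succ]; omega]
    calc ∑ k ∈ range (2 ^ n), x ^ norm1 (2 ^ n + k)
        = x ^ (n + 1) * ∑ k ∈ range (2 ^ n), x ^ norm1 k := by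
          rw [mul_sum]
          refine sum_congr rfl fun k hk => ?_
          rw [norm1_add n k (mem_range.1 hk), pow_add]
      _ ≤ _ := by
          rw [sum_pow_norm1]
          exact mul_le_mul_of_nonneg_left (hP n) (by positivity)

theorem size_le_norm1 (k : ℕ) : Nat.size k ≤ norm1 k := by
  rcases Nat.eq_zero_or_pos k with rfl | hk
  · simp
  · obtain ⟨n, hn⟩ : ∃ n, Nat.size k = n + 1 :=
      Nat.exists_eq_succ_of_ne_zero (Nat.size_pos.2 hk).ne'
    have h1 : k < 2 ^ (n + 1) := Nat.size_le.1 hn.le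
    have h2 : 2 ^ n ≤ k := Nat.lt_size.1 (by omega)
    have := norm1_add n (k - 2 ^ n) (by rw [pow_succ] at h1; omega)
    rw [Nat.add_sub_cancel' h2] at this
    omega

open Finset in
theorem card_tuples (s n : ℕ) (hs : 1 ≤ s) :
    (piAntidiag (univ : Finset (Fin s)) n).card = Nat.choose (n + s - 1) (s - 1) := by
  let e : Sym (Fin s) n ≃ {P : Fin s → ℕ // ∑ i, P i = n} := Sym.equivNatSumOfFintype (Fin s) n
  have h1 : (piAntidiag (univ : Finset (Fin s)) n).card = Fintype.card (Sym (Fin s) n) := by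
    have i : Fintype {P : Fin s → ℕ // ∑ i, P i = n} := Fintype.ofEquiv _ e
    rw [Fintype.card_congr e]
    exact (Fintype.card_of_subtype _ (fun f => by simp)).symm
  rw [h1, Sym.card_sym_eq_choose, Fintype.card_fin, Nat.add_comm s n, ← Nat.choose_symm (by omega)]
  congr 1; omega

open Finset in
theorem prod_bound (t : ℝ) (ht : 0 < t) (n : ℕ) :
    ∏ i ∈ range n, (1 + Real.exp (-t) ^ (i + 1)) ≤ Real.exp (Real.pi ^ 2 / (12 * t)) := by
  set x := Real.exp (-t) with hx
  have x0 : 0 < x := Real.exp_pos _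
  have x1 : x < 1 := by rw [hx, Real.exp_lt_one_iff]; linarith
  have pos : ∀ i : ℕ, 0 < 1 - x ^ (i + 1) := fun i => by
    have := pow_lt_one₀ x0.le x1 (Nat.succ_ne_zero i)
    simpa using this
  -- finite Euler identity
  have euler : ∀ n : ℕ, (∏ i ∈ range n, (1 + x ^ (i + 1))) * (∏ i ∈ range n, (1 - x ^ (i + 1)))
      * (∏ i ∈ range n, (1 - x ^ (2 * i + 1))) = ∏ i ∈ range (2 * n), (1 - x ^ (i + 1)) := by
    intro n
    induction n with
    | zero => simp
    | succ n ih =>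
      rw [show 2 * (n + 1) = 2 * n + 1 + 1 by ring, prod_range_succ _ (2 * n + 1),
        prod_range_succ _ (2 * n), ← ih]
      simp only [prod_range_succ]
      ring
  have hA : 0 < ∏ i ∈ range n, (1 - x ^ (i + 1)) := prod_pos fun i _ => pos i
  have hB : 0 < ∏ i ∈ range n, (1 - x ^ (2 * i + 1)) := prod_pos fun i _ => pos (2 * i)
  have h1 : (∏ i ∈ range n, (1 + x ^ (i + 1))) * (∏ i ∈ range n, (1 - x ^ (2 * i + 1))) ≤ 1 := by
    have h2 : ∏ i ∈ range (2 * n), (1 - x ^ (i + 1)) ≤ ∏ i ∈ range n, (1 - x ^ (i + 1)) := by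
      rw [two_mul, prod_range_add]
      refine mul_le_of_le_one_right hA.le (prod_le_one (fun i _ => (pos _).le) fun i _ => ?_)
      have : 0 < x ^ (n + i + 1) := by positivity
      linarith
    rw [← euler] at h2
    by_contra hc
    push Not at hc
    nlinarith
  have hlog : -∑ i ∈ range n, Real.log (1 - x ^ (2 * i + 1)) ≤ Real.pi ^ 2 / (12 * t) := by
    have s1 : HasSum (fun m : ℕ => ∑ i ∈ range n, (x ^ (2 * i + 1)) ^ (m + 1) / ((m : ℝ) + 1))
        (∑ i ∈ range n, -Real.log (1 - x ^ (2 * i + 1))) := by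
      refine hasSum_sum fun i _ => Real.hasSum_pow_div_log_of_abs_lt_one ?_
      rw [abs_of_pos (by positivity)]
      linarith [pos (2 * i)]
    have s2 : HasSum (fun m : ℕ => 1 / (2 * t) * (1 / ((m + 1 : ℕ) : ℝ) ^ 2))
        (1 / (2 * t) * (Real.pi ^ 2 / 6)) := by
      refine HasSum.mul_left _ ?_
      have := (hasSum_nat_add_iff' (f := fun n : ℕ => (1 : ℝ) / (n : ℝ) ^ 2) 1).2 hasSum_zeta_two
      simpa using this
    rw [← sum_neg_distrib]
    have := hasSum_le (fun m => ?_) s1 s2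
    · refine this.trans (le_of_eq ?_)
      field_simp; norm_num
    · rw [← sum_div]
      set y := x ^ (m + 1) with hy
      have y0 : 0 < y := by positivity
      have y1 : 0 < 1 - y := pos m
      have e1 : ∑ i ∈ range n, (x ^ (2 * i + 1)) ^ (m + 1) = y * ∑ i ∈ range n, (y ^ 2) ^ i := by
        rw [mul_sum]
        refine sum_congr rfl fun i _ => ?_
        rw [hy]; ring
      have y2 : 0 < 1 - y ^ 2 := by nlinarith
      have e2 : (∑ i ∈ range n, (y ^ 2) ^ i) * (1 - y ^ 2) ≤ 1 := by
        have := geom_sum_mul (y ^ 2) n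
        have : 0 ≤ (y ^ 2) ^ n := by positivity
        linarith
      -- 2 (m+1) t y ≤ 1 - y^2
      have e3 : 2 * (((m : ℝ) + 1) * t) * y ≤ 1 - y ^ 2 := by
        have hs := Real.self_le_sinh_iff.2 (show 0 ≤ ((m : ℝ) + 1) * t by positivity)
        have ye : y = Real.exp (-(((m : ℝ) + 1) * t)) := by
          rw [hy, hx, ← Real.exp_nat_mul]; congr 1; push_cast; ring
        rw [Real.sinh_eq, ← ye] at hs
        have yz : Real.exp (((m : ℝ) + 1) * t) * y = 1 := by
          rw [ye, ← Real.exp_add]; simp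
        nlinarith
      rw [e1]
      set S := ∑ i ∈ range n, (y ^ 2) ^ i
      have S0 : 0 ≤ S := sum_nonneg fun i _ => by positivity
      have e4 : y * S * (2 * (((m : ℝ) + 1) * t)) ≤ 1 := by nlinarith
      have m0 : (0 : ℝ) < (m : ℝ) + 1 := by positivity
      push_cast
      rw [div_le_iff₀ m0]
      have : 1 / (2 * t) * (1 / ((m : ℝ) + 1) ^ 2) * ((m : ℝ) + 1) = 1 / (2 * (((m : ℝ) + 1) * t)) := by
        field_simp
      rw [this, le_div_iff₀ (by positivity)]
      exact e4
  have h3 : ∏ i ∈ range n, (1 - x ^ (2 * i + 1)) = Real.exp (∑ i ∈ range n, Real.log (1 - x ^ (2 * i + 1))) := by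
    rw [Real.exp_sum]
    exact prod_congr rfl fun i _ => (Real.exp_log (pos (2 * i))).symm
  rw [← le_div_iff₀ hB, h3, one_div, ← Real.exp_neg] at h1
  exact h1.trans (Real.exp_le_exp.2 hlog)

open Finset in
theorem choose_bound (R s r : ℕ) (hR : 1 ≤ R) (hs : 1 ≤ s) :
    (Nat.choose (R + 1 + r + s - 1) (s - 1) : ℝ) ≤
      Nat.choose (R + s) (s - 1) * Real.exp (r * ((s - 1 : ℝ) / R)) := by
  obtain ⟨d, rfl⟩ : ∃ d, s = d + 1 := ⟨s - 1, by omega⟩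
  simp only [Nat.add_sub_cancel]
  induction r with
  | zero =>
    simp only [Nat.cast_zero, zero_mul, Real.exp_zero, mul_one]
    rw [show R + 1 + 0 + (d + 1) - 1 = R + (d + 1) by omega]
  | succ r ih =>
    rw [show R + 1 + r + (d + 1) - 1 = R + 1 + r + d by omega] at ih
    rw [show R + 1 + (r + 1) + (d + 1) - 1 = R + 1 + r + d + 1 by omega]
    have h1 : (R + 1 + r + d).choose d * (R + 1 + r + d + 1) = (R + 1 + r + d + 1).choose d * (R + 1 + r + 1) := by
      have := Nat.choose_mul_succ_eq (R + 1 + r + d) d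
      rwa [show R + 1 + r + d + 1 - d = R + 1 + r + 1 by omega] at this
    have h2 : ((R + 1 + r + d).choose d : ℝ) * (R + 1 + r + d + 1) = (R + 1 + r + d + 1).choose d * (R + 1 + r + 1) := by
      exact_mod_cast h1
    have R0 : (0 : ℝ) < R := by exact_mod_cast hR
    have h3 : ((R : ℝ) + 1 + r + d + 1) / (R + 1 + r + 1) ≤ Real.exp (d / R) := by
      refine le_trans ?_ (Real.add_one_le_exp _)
      rw [div_le_iff₀ (by positivity)]
      have : (d : ℝ) / R * R = d := by field_simp
      have : 0 ≤ (d : ℝ) / R * (1 + r + 1) := by positivity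
      nlinarith
    have h4 : ((R + 1 + r + d + 1).choose d : ℝ) = ((R + 1 + r + d).choose d : ℝ) * (((R : ℝ) + 1 + r + d + 1) / (R + 1 + r + 1)) := by
      rw [mul_div_assoc', h2]; field_simp
    rw [h4]
    calc _ ≤ (Nat.choose (R + (d + 1)) d * Real.exp (r * (((d + 1 : ℕ) - 1 : ℝ) / R))) * Real.exp (d / R) :=
          mul_le_mul ih h3 (by positivity) (by positivity)
      _ = _ := by
          rw [mul_assoc, ← Real.exp_add]
          congr 2; push_cast; ring

open Finset in
theorem count_aux (R s N : ℕ) (x P : ℝ) (hs : 1 ≤ s) (hx : 0 < x) (hx1 : x ≤ 1)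
    (hP : ∀ n : ℕ, ∏ i ∈ range n, (1 + x ^ (i + 1)) ≤ P) :
    ({k : Fin s → ℕ | k ≠ 0 ∧ norm1Vec k ≤ N + R ∧ R < ceilSum k}.ncard : ℝ) ≤
      ∑ r ∈ range N, (Nat.choose (R + 1 + r + s - 1) (s - 1) : ℝ) * (x ^ (R + 1 + r) * P ^ s / x ^ (N + R)) := by
  classical
  let fib : ℕ → Finset ℕ := fun q => (range (2 ^ q)).filter (fun k => Nat.size k = q)
  let T : (Fin s → ℕ) → Finset (Fin s → ℕ) := fun q =>
    (Fintype.piFinset fun j => fib (q j)).filter (fun k => norm1Vec k ≤ N + R)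
  let U := (range N).biUnion fun r => (piAntidiag (univ : Finset (Fin s)) (R + 1 + r)).biUnion T
  have hsub : {k : Fin s → ℕ | k ≠ 0 ∧ norm1Vec k ≤ N + R ∧ R < ceilSum k} ⊆ (U : Set (Fin s → ℕ)) := by
    rintro k ⟨_, h1, h2⟩
    have h3 : ceilSum k ≤ norm1Vec k := sum_le_sum fun j _ => size_le_norm1 (k j)
    simp only [U, mem_coe, mem_biUnion, mem_range]
    refine ⟨ceilSum k - (R + 1), by omega, fun j => Nat.size (k j), ?_, ?_⟩
    · rw [mem_piAntidiag]
      refine ⟨?_, fun i _ => mem_univ i⟩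
      change ceilSum k = _
      omega
    · simp only [T, mem_filter, Fintype.mem_piFinset, fib, mem_range]
      exact ⟨fun j => ⟨Nat.size_le.1 le_rfl, trivial⟩, h1⟩
  have hcard : ({k : Fin s → ℕ | k ≠ 0 ∧ norm1Vec k ≤ N + R ∧ R < ceilSum k}.ncard : ℝ) ≤ (U.card : ℝ) := by
    rw [← Set.ncard_coe_finset]
    exact_mod_cast Set.ncard_le_ncard hsub (finite_toSet _)
  have hT : ∀ q, ((T q).card : ℝ) ≤ x ^ (∑ j, q j) * P ^ s / x ^ (N + R) := by
    intro q
    rw [le_div_iff₀ (by positivity)]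
    calc ((T q).card : ℝ) * x ^ (N + R) = ∑ k ∈ T q, x ^ (N + R) := by simp
      _ ≤ ∑ k ∈ T q, x ^ norm1Vec k := by
          refine sum_le_sum fun k hk => ?_
          exact pow_le_pow_of_le_one hx.le hx1 (mem_filter.1 hk).2
      _ ≤ ∑ k ∈ Fintype.piFinset fun j => fib (q j), x ^ norm1Vec k :=
          sum_le_sum_of_subset_of_nonneg (filter_subset _ _) fun k _ _ => by positivity
      _ = ∏ j, ∑ k ∈ fib (q j), x ^ norm1 k := by
          rw [prod_univ_sum]
          refine sum_congr rfl fun k _ => ?_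
          rw [norm1Vec, prod_pow_eq_pow_sum]
      _ ≤ ∏ j, (x ^ q j * P) := by
          refine prod_le_prod (fun j _ => sum_nonneg fun k _ => by positivity) fun j _ => ?_
          exact fiber_sum x P hx.le hP (q j)
      _ = _ := by
          rw [prod_mul_distrib, prod_pow_eq_pow_sum]; simp
  refine hcard.trans ?_
  calc (U.card : ℝ) ≤ ∑ r ∈ range N, ∑ q ∈ piAntidiag (univ : Finset (Fin s)) (R + 1 + r), ((T q).card : ℝ) := by
        have : U.card ≤ ∑ r ∈ range N, ∑ q ∈ piAntidiag (univ : Finset (Fin s)) (R + 1 + r), (T q).card :=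
          card_biUnion_le.trans (sum_le_sum fun r _ => card_biUnion_le)
        exact_mod_cast this
    _ ≤ _ := by
        refine sum_le_sum fun r _ => ?_
        rw [← card_tuples s _ hs, ← nsmul_eq_mul]
        refine sum_le_card_nsmul _ _ _ fun q hq => ?_
        have := (mem_piAntidiag.1 hq).1
        rw [← this]
        exact hT q

theorem count_ceil_lt (R s N : ℕ) (hR : 1 ≤ R) (hs : 1 ≤ s) (hN : 1 ≤ N)
    (h : 2 * Real.sqrt (3 * (s - 1 : ℝ) * N) / Real.pi ≤ R) :
    ({k : Fin s → ℕ | k ≠ 0 ∧ norm1Vec k ≤ N + R ∧ R < ceilSum k}.ncard : ℝ) <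
      (Nat.choose (R + s) (s - 1) : ℝ) * N * Real.exp (Real.pi * Real.sqrt (s * N / 3)) := by
  have N0 : (0 : ℝ) < N := by exact_mod_cast hN
  have R0 : (0 : ℝ) < R := by exact_mod_cast hR
  have s1 : (1 : ℝ) ≤ s := by exact_mod_cast hs
  have s0 : (0 : ℝ) < s := by linarith
  have pi0 := Real.pi_pos
  set w := Real.sqrt (s * N / 3) with hw
  have w0 : 0 < w := Real.sqrt_pos.2 (by positivity)
  have w2 : w ^ 2 = s * N / 3 := Real.sq_sqrt (by positivity)
  set t := Real.pi * w / (2 * N) with htdef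
  have t0 : 0 < t := by positivity
  set x := Real.exp (-t) with hx
  have x1 : x ≤ 1 := by rw [hx, Real.exp_le_one_iff]; linarith
  have key := count_aux R s N x (Real.exp (Real.pi ^ 2 / (12 * t))) hs (Real.exp_pos _) x1
    (prod_bound t t0)
  have hst : (s - 1 : ℝ) / R ≤ t := by
    set v := Real.sqrt (3 * (s - 1 : ℝ) * N) with hv
    have v0 : 0 ≤ v := Real.sqrt_nonneg _
    have v2 : v ^ 2 = 3 * (s - 1 : ℝ) * N := Real.sq_sqrt (mul_nonneg (mul_nonneg (by norm_num) (by linarith)) N0.le)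
    have vw : v ≤ 3 * w := by
      refine abs_le_of_sq_le_sq' ?_ (by positivity) |>.2
      nlinarith
    rw [div_le_iff₀ pi0] at h
    rw [div_le_iff₀ R0, htdef, div_mul_eq_mul_div, le_div_iff₀ (by positivity)]
    nlinarith
  have hexp : ∀ r : ℕ, x ^ (R + 1 + r) * Real.exp (Real.pi ^ 2 / (12 * t)) ^ s / x ^ (N + R)
      = Real.exp (Real.pi * w) * Real.exp (-(r + 1) * t) := by
    intro r
    rw [hx, ← Real.exp_nat_mul, ← Real.exp_nat_mul, ← Real.exp_nat_mul, ← Real.exp_add, ← Real.exp_sub,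
      ← Real.exp_add]
    congr 1
    have e1 : (s : ℝ) * (Real.pi ^ 2 / (12 * t)) = Real.pi * w / 2 := by
      rw [htdef]; field_simp; nlinarith
    have e2 : (N : ℝ) * t = Real.pi * w / 2 := by rw [htdef]; field_simp
    rw [e1]; push_cast; linarith
  refine key.trans_lt ?_
  have hC : (0 : ℝ) < Nat.choose (R + s) (s - 1) := by
    exact_mod_cast Nat.choose_pos (by omega)
  calc _ < ∑ r ∈ Finset.range N, (Nat.choose (R + s) (s - 1) : ℝ) * Real.exp (Real.pi * w) := by
        refine Finset.sum_lt_sum_of_nonempty ⟨0, Finset.mem_range.2 hN⟩ fun r _ => ?_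
        rw [hexp]
        calc _ ≤ Nat.choose (R + s) (s - 1) * Real.exp (r * ((s - 1 : ℝ) / R)) *
              (Real.exp (Real.pi * w) * Real.exp (-(r + 1) * t)) :=
              mul_le_mul_of_nonneg_right (choose_bound R s r hR hs) (by positivity)
          _ = Nat.choose (R + s) (s - 1) * Real.exp (Real.pi * w) *
              Real.exp (r * ((s - 1 : ℝ) / R) + -(r + 1) * t) := by
              rw [Real.exp_add]; ring
          _ < _ := by
              refine mul_lt_of_lt_one_right (by positivity) (Real.exp_lt_one_iff.2 ?_)
              have := mul_le_mul_of_nonneg_left hst (Nat.cast_nonneg (α := ℝ) r)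
              linarith
    _ = _ := by
        rw [Finset.sum_const, Finset.card_range, nsmul_eq_mul]; ring

end MedianQMC
end

section
/- Let λ = 3 log(2)²/π². Fix an integer s ≥ 1 and a real ρ ∈ (0,1). Then there exists a constant B₁ such that for all integers m ≥ 2, Σ over 𝐤 ∈ ℕ₀^s ∖ {0} with ‖𝛋‖₁ > λm²/s of 2^{−‖𝛋‖₁} · ρ^{−‖𝛋‖₀} · (‖𝛋‖₀)! is at most 2^{−λm²/s + B₁ m log₂ m} (in particular this sum converges). -/
open MeasureTheory ProbabilityTheory
open scoped ENNReal

namespace MedianQMC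

theorem bitFinset_injective : Function.Injective bitFinset := by
  intro a b h
  apply Nat.eq_of_testBit_eq
  intro i
  have key : ∀ k : ℕ, i ∈ bitFinset k ↔ k.testBit i = true := by
    intro k
    unfold bitFinset
    rw [Finset.mem_filter, Finset.mem_range]
    constructor
    · exact fun h => h.2
    · intro h
      refine ⟨?_, h⟩
      have := Nat.ge_two_pow_of_testBit h
      have := @Nat.lt_two_pow_self i
      omega
  have h1 := key a
  rw [h, key b] at h1
  exact (Bool.eq_iff_iff.mpr h1).symm

theorem card_sq_le (S : Finset ℕ) : S.card ^ 2 ≤ 2 * ∑ i ∈ S, (i + 1) := by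
  induction S using Finset.induction_on_max with
  | empty => simp
  | insert a S ha ih =>
    have hn : a ∉ S := fun h => lt_irrefl _ (ha a h)
    rw [Finset.card_insert_of_notMem hn, Finset.sum_insert hn]
    have : S.card ≤ a := by
      have := Finset.card_le_card (show S ⊆ Finset.range a from
        fun x hx => Finset.mem_range.mpr (ha x hx))
      simpa using this
    nlinarith

theorem norm0_sq_le {s : ℕ} (k : Fin s → ℕ) :
    (norm0Vec k : ℝ) ^ 2 ≤ 2 * s * norm1Vec k := by
  have h : (norm0Vec k) ^ 2 ≤ s * (2 * norm1Vec k) := by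
    unfold norm0Vec norm1Vec
    have h1 := sq_sum_le_card_mul_sum_sq (s := (Finset.univ : Finset (Fin s)))
      (f := fun j => (bitFinset (k j)).card)
    refine h1.trans ?_
    rw [Finset.card_univ, Fintype.card_fin, Finset.mul_sum (Finset.univ : Finset (Fin s)) (fun j => norm1 (k j)) 2]
    exact Nat.mul_le_mul_left _ (Finset.sum_le_sum fun j _ => card_sq_le _)
  have h' : ((norm0Vec k : ℝ)) ^ 2 ≤ s * (2 * norm1Vec k) := by exact_mod_cast h
  linarith

theorem sum_one_le (q : ℝ) (h0 : 0 ≤ q) (h1 : q < 1) (M : ℕ) :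
    ∑ k ∈ Finset.range M, q ^ norm1 k ≤ Real.exp (q / (1 - q)) := by
  have hsub : (Finset.range M).image bitFinset ⊆ (Finset.range M).powerset := by
    intro S hS
    obtain ⟨k, hk, rfl⟩ := Finset.mem_image.mp hS
    rw [Finset.mem_powerset]
    intro i hi
    have hi := (Finset.mem_filter.mp hi).1
    rw [Finset.mem_range] at *
    omega
  calc ∑ k ∈ Finset.range M, q ^ norm1 k
      = ∑ S ∈ (Finset.range M).image bitFinset, ∏ i ∈ S, q ^ (i + 1) := by
        rw [Finset.sum_image bitFinset_injective.injOn]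
        refine Finset.sum_congr rfl fun k _ => ?_
        rw [Finset.prod_pow_eq_pow_sum]; rfl
    _ ≤ ∑ S ∈ (Finset.range M).powerset, ∏ i ∈ S, q ^ (i + 1) :=
        Finset.sum_le_sum_of_subset_of_nonneg hsub
          fun S _ _ => Finset.prod_nonneg fun i _ => by positivity
    _ = ∏ i ∈ Finset.range M, (1 + q ^ (i + 1)) := (Finset.prod_one_add _).symm
    _ ≤ ∏ i ∈ Finset.range M, Real.exp (q ^ (i + 1)) := by
        refine Finset.prod_le_prod (fun i _ => by positivity) fun i _ => ?_
        have := Real.add_one_le_exp (q ^ (i + 1))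
        linarith
    _ = Real.exp (∑ i ∈ Finset.range M, q ^ (i + 1)) := (Real.exp_sum _ _).symm
    _ ≤ Real.exp (q / (1 - q)) := by
        apply Real.exp_le_exp.mpr
        have hs : HasSum (fun i : ℕ => q ^ (i + 1)) (q / (1 - q)) := by
          have := (hasSum_geometric_of_lt_one h0 h1).mul_left q
          simpa [pow_succ', div_eq_mul_inv] using this
        exact sum_le_hasSum _ (fun i _ => by positivity) hs

theorem sum_vec_le {s : ℕ} (q : ℝ) (h0 : 0 ≤ q) (h1 : q < 1) (A : Finset (Fin s → ℕ)) :
    ∑ k ∈ A, q ^ norm1Vec k ≤ Real.exp (s * (q / (1 - q))) := by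
  classical
  obtain ⟨M, hM⟩ : ∃ M : ℕ, ∀ k ∈ A, ∀ j, k j < M := by
    refine ⟨(∑ k ∈ A, ∑ j, k j) + 1, fun k hk j => ?_⟩
    have a1 : k j ≤ ∑ j, k j := Finset.single_le_sum (fun _ _ => Nat.zero_le _) (Finset.mem_univ j)
    have a2 : ∑ j, k j ≤ ∑ k ∈ A, ∑ j, k j :=
      Finset.single_le_sum (f := fun k : Fin s → ℕ => ∑ j, k j) (fun _ _ => Nat.zero_le _) hk
    omega
  calc ∑ k ∈ A, q ^ norm1Vec k
      ≤ ∑ k ∈ Fintype.piFinset (fun _ : Fin s => Finset.range M), q ^ norm1Vec k := by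
        refine Finset.sum_le_sum_of_subset_of_nonneg ?_ fun k _ _ => by positivity
        intro k hk
        rw [Fintype.mem_piFinset]
        exact fun j => Finset.mem_range.mpr (hM k hk j)
    _ = ∏ _j : Fin s, ∑ n ∈ Finset.range M, q ^ norm1 n := by
        rw [Finset.prod_univ_sum]
        refine Finset.sum_congr rfl fun k _ => ?_
        rw [Finset.prod_pow_eq_pow_sum]; rfl
    _ ≤ ∏ _j : Fin s, Real.exp (q / (1 - q)) :=
        Finset.prod_le_prod (fun _ _ => Finset.sum_nonneg fun _ _ => by positivity)
          fun _ _ => sum_one_le q h0 h1 M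
    _ = Real.exp (s * (q / (1 - q))) := by
        rw [Finset.prod_const, Finset.card_univ, Fintype.card_fin, ← Real.exp_nat_mul]

theorem logb_two_le (x : ℝ) (hx : 0 < x) : Real.logb 2 x ≤ x := by
  have h2 : (1 / 2 : ℝ) < Real.log 2 := by have := Real.log_two_gt_d9; linarith
  have h3 : Real.log 2 < 1 := by have := Real.log_two_lt_d9; linarith
  have := Real.log_le_sub_one_of_pos (show 0 < x / 2 by positivity)
  rw [Real.log_div hx.ne' (by norm_num)] at this
  rw [Real.logb, div_le_iff₀ (by linarith)]
  nlinarith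

/-- The exponent estimate. -/
theorem exponent_bound (s m n N D a : ℝ) (hs : 1 ≤ s) (hm : 0 < m) (hn : 0 < n)
    (hD : 1 ≤ D) (hDm : D = Real.logb 2 m) (ha : 0 ≤ a) (hN : n ^ 2 ≤ 2 * s * N) :
    -(D / m / 2 * N) + a * n + n * Real.logb 2 n ≤
      2 * s * (a + Real.logb 2 (8 * s) + 1) ^ 2 * m * D := by
  set c := Real.logb 2 (8 * s) with hc
  have hc0 : 0 ≤ c := Real.logb_nonneg (by norm_num) (by linarith)
  obtain ⟨y, hy⟩ : ∃ y, y = n / m := ⟨_, rfl⟩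
  have hy0 : 0 < y := by rw [hy]; positivity
  have hny : n = y * m := by rw [hy]; field_simp
  have hs0 : 0 < s := by linarith
  have hl : Real.logb 2 n ≤ y / (8 * s) + c + D := by
    have e : n = (y / (8 * s)) * (8 * s) * m := by rw [hny]; field_simp
    rw [e, Real.logb_mul (by positivity) (by positivity), Real.logb_mul (by positivity)
      (by positivity), ← hDm]
    have := logb_two_le (y / (8 * s)) (by positivity)
    linarith
  have hN' : D * m * (y ^ 2 / (4 * s)) ≤ D / m / 2 * N := by
    have : n ^ 2 / (2 * s) ≤ N := by rw [div_le_iff₀ (by positivity)]; linarith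
    calc D * m * (y ^ 2 / (4 * s)) = D / m / 2 * (n ^ 2 / (2 * s)) := by rw [hny]; field_simp; ring
      _ ≤ _ := by gcongr
  have h1 : n * Real.logb 2 n ≤ y * m * (y / (8 * s) + c + D) := by
    rw [← hny]; gcongr
  obtain ⟨w, hw⟩ : ∃ w, w = y / (8 * s) := ⟨_, rfl⟩
  have hw0 : 0 < w := by rw [hw]; positivity
  have hyw : y = 8 * s * w := by rw [hw]; field_simp
  have e1 : y ^ 2 / (4 * s) = 2 * y * w := by rw [hw]; field_simp; ring
  rw [e1] at hN'
  rw [← hw] at h1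
  rw [hny] at h1 ⊢
  have h2 : y * w + (a + c) * y ≤ D * (y * w + (a + c) * y) :=
    le_mul_of_one_le_left (by positivity) hD
  have h3 : -(y * w) + (a + c + 1) * y ≤ 2 * s * (a + c + 1) ^ 2 := by
    have : 0 ≤ 2 * s * (2 * w - (a + c + 1)) ^ 2 := by positivity
    rw [hyw]; nlinarith
  have h4 : m * (y * w + (a + c) * y) ≤ m * (D * (y * w + (a + c) * y)) := by gcongr
  have h5 : m * D * (-(y * w) + (a + c + 1) * y) ≤ m * D * (2 * s * (a + c + 1) ^ 2) := by
    gcongr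
  nlinarith

open scoped Classical in
/-- with `λ = 3log(2)²/π²`, for fixed `s ≥ 1` and `ρ ∈ (0,1)` there is a
constant `B₁` such that for all `m ≥ 2`, the sum over `𝐤 ∈ ℕ₀^s ∖ {0}` with
`‖𝛋‖₁ > λm²/s` of `2^{−‖𝛋‖₁} ρ^{−‖𝛋‖₀} (‖𝛋‖₀)!` converges and is at most
`2^{−λm²/s + B₁ m log₂ m}`. -/
theorem tail_sum_bound (s : ℕ) (hs : 1 ≤ s) (ρ : ℝ) (hρ : ρ ∈ Set.Ioo (0:ℝ) 1) :
    ∃ B₁ : ℝ, ∀ m : ℕ, 2 ≤ m →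
      Summable (fun k : Fin s → ℕ =>
        if k ≠ 0 ∧ lam * m ^ 2 / s < (norm1Vec k : ℝ) then
          (2 : ℝ)⁻¹ ^ norm1Vec k * ρ⁻¹ ^ norm0Vec k * (Nat.factorial (norm0Vec k) : ℝ)
        else 0) ∧
      (∑' k : Fin s → ℕ,
        if k ≠ 0 ∧ lam * m ^ 2 / s < (norm1Vec k : ℝ) then
          (2 : ℝ)⁻¹ ^ norm1Vec k * ρ⁻¹ ^ norm0Vec k * (Nat.factorial (norm0Vec k) : ℝ)
        else 0) ≤
        (2 : ℝ) ^ (-(lam * m ^ 2 / s) + B₁ * m * Real.logb 2 m) := by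
  obtain ⟨hρ0, hρ1⟩ := hρ
  set a : ℝ := Real.logb 2 ρ⁻¹ with ha
  have ha0 : 0 ≤ a := Real.logb_nonneg (by norm_num) ((one_le_inv₀ hρ0).mpr hρ1.le)
  set E : ℝ := 2 * s * (a + Real.logb 2 (8 * s) + 1) ^ 2 with hE
  have hE0 : 0 ≤ E := by positivity
  have hs' : (1 : ℝ) ≤ s := by exact_mod_cast hs
  have h2 : (1 / 2 : ℝ) < Real.log 2 := by have := Real.log_two_gt_d9; linarith
  refine ⟨lam / s + E + 8 * s, fun m hm => ?_⟩
  have hm2 : (2 : ℝ) ≤ m := by exact_mod_cast hm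
  have hm0 : (0 : ℝ) < m := by linarith
  obtain ⟨D, hD⟩ : ∃ D, D = Real.logb 2 (m : ℝ) := ⟨_, rfl⟩
  rw [← hD]
  have hD1 : 1 ≤ D := by
    rw [hD, Real.le_logb_iff_rpow_le (by norm_num) hm0]; simpa using hm2
  have hDm : D ≤ m := hD ▸ logb_two_le m hm0
  set L : ℝ := lam * m ^ 2 / s with hL
  set δ : ℝ := D / m with hδ
  have hδ0 : 0 < δ := by positivity
  have hδ1 : δ ≤ 1 := by rw [hδ, div_le_one hm0]; exact hDm
  have hLδ : L * δ = lam / s * m * D := by rw [hL, hδ]; field_simp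
  set q : ℝ := (2 : ℝ) ^ (-(δ / 2)) with hq
  have hq0 : 0 < q := by positivity
  have hq1 : q < 1 := Real.rpow_lt_one_of_one_lt_of_neg (by norm_num) (by linarith)
  set K : ℝ := (2 : ℝ) ^ (-L + L * δ + E * m * D) with hK
  have hqq : q / (1 - q) ≤ 4 * m := by
    have hinv : 1 + δ / 2 * Real.log 2 ≤ q⁻¹ := by
      rw [hq, ← Real.rpow_neg (by norm_num), neg_neg, Real.rpow_def_of_pos (by norm_num)]
      have := Real.add_one_le_exp (Real.log 2 * (δ / 2))
      linarith
    have hδm : 1 ≤ δ * m := by rw [hδ]; field_simp; exact hD1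
    have h3 : 1 ≤ 4 * m * (q⁻¹ - 1) := by
      have : δ / 2 * (1 / 2) ≤ δ / 2 * Real.log 2 := by gcongr
      have : 4 * m * (δ / 2 * (1 / 2)) ≤ 4 * m * (q⁻¹ - 1) := by
        gcongr; linarith
      nlinarith
    rw [div_le_iff₀ (by linarith)]
    calc q = q * 1 := (mul_one q).symm
      _ ≤ q * (4 * m * (q⁻¹ - 1)) := by gcongr
      _ = 4 * m * (1 - q) := by field_simp
  have hexp : Real.exp (s * (q / (1 - q))) ≤ (2 : ℝ) ^ (8 * s * m * D) := by
    rw [Real.rpow_def_of_pos (by norm_num)]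
    apply Real.exp_le_exp.mpr
    have e1 : s * (q / (1 - q)) ≤ s * (4 * m) := by gcongr
    have e2 : (s : ℝ) * (4 * m) ≤ s * (4 * m) * D := le_mul_of_one_le_right (by positivity) hD1
    have e3 : (1 / 2 : ℝ) * (8 * s * m * D) ≤ Real.log 2 * (8 * s * m * D) := by gcongr
    linarith
  have hterm : ∀ k : Fin s → ℕ, (if k ≠ 0 ∧ L < (norm1Vec k : ℝ) then
          (2 : ℝ)⁻¹ ^ norm1Vec k * ρ⁻¹ ^ norm0Vec k * (Nat.factorial (norm0Vec k) : ℝ)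
        else 0) ≤ K * q ^ norm1Vec k := by
    intro k
    split_ifs with h
    · obtain ⟨-, hLN⟩ := h
      have hnN := norm0_sq_le k
      generalize norm1Vec k = N at *
      generalize norm0Vec k = n at *
      have p1 : (2 : ℝ)⁻¹ ^ N = (2 : ℝ) ^ (-(N : ℝ)) := by
        rw [Real.rpow_neg (by norm_num), Real.rpow_natCast, inv_pow]
      have p2 : ρ⁻¹ ^ n = (2 : ℝ) ^ (a * n) := by
        rw [Real.rpow_mul (by norm_num), ha, Real.rpow_logb (by norm_num) (by norm_num)
          (by positivity), Real.rpow_natCast]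
      have p3 : q ^ N = (2 : ℝ) ^ (-(δ / 2) * N) := by
        rw [Real.rpow_mul (by norm_num), Real.rpow_natCast]
      have p4 : (Nat.factorial n : ℝ) ≤ (2 : ℝ) ^ (n * Real.logb 2 n) := by
        rcases Nat.eq_zero_or_pos n with rfl | hn
        · simp
        · have hn' : (0 : ℝ) < n := by exact_mod_cast hn
          rw [mul_comm, Real.rpow_mul (by norm_num), Real.rpow_logb (by norm_num) (by norm_num) hn',
            Real.rpow_natCast]
          exact_mod_cast Nat.factorial_le_pow n
      have hexpo : -(δ / 2 * N) + a * n + n * Real.logb 2 n ≤ E * m * D := by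
        rcases Nat.eq_zero_or_pos n with rfl | hn
        · have : 0 ≤ E * m * D := by positivity
          have : 0 ≤ δ / 2 * N := by positivity
          simp; linarith
        · exact exponent_bound s m n N D a hs' hm0 (by exact_mod_cast hn) hD1 hD ha0 hnN
      calc (2 : ℝ)⁻¹ ^ N * ρ⁻¹ ^ n * (Nat.factorial n : ℝ)
          ≤ (2 : ℝ) ^ (-(N : ℝ)) * (2 : ℝ) ^ (a * n) * (2 : ℝ) ^ (n * Real.logb 2 n) := by
            rw [p1, p2]; gcongr
        _ = (2 : ℝ) ^ (-(N : ℝ) + a * n + n * Real.logb 2 n) := by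
            rw [Real.rpow_add (by norm_num), Real.rpow_add (by norm_num)]
        _ ≤ (2 : ℝ) ^ (-L + L * δ + E * m * D + -(δ / 2) * N) := by
            apply Real.rpow_le_rpow_of_exponent_le (by norm_num)
            have : 0 ≤ (1 - δ) * (N - L) := mul_nonneg (by linarith) (by linarith)
            nlinarith
        _ = K * q ^ N := by rw [Real.rpow_add (by norm_num), p3]
    · positivity
  have hnn : ∀ k : Fin s → ℕ, 0 ≤ (if k ≠ 0 ∧ L < (norm1Vec k : ℝ) then
          (2 : ℝ)⁻¹ ^ norm1Vec k * ρ⁻¹ ^ norm0Vec k * (Nat.factorial (norm0Vec k) : ℝ)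
        else 0) := by
    intro k
    split_ifs <;> positivity
  have hsum : ∀ A : Finset (Fin s → ℕ), ∑ k ∈ A, (if k ≠ 0 ∧ L < (norm1Vec k : ℝ) then
          (2 : ℝ)⁻¹ ^ norm1Vec k * ρ⁻¹ ^ norm0Vec k * (Nat.factorial (norm0Vec k) : ℝ)
        else 0) ≤ (2 : ℝ) ^ (-L + (lam / s + E + 8 * s) * m * D) := by
    intro A
    calc _ ≤ ∑ k ∈ A, K * q ^ norm1Vec k := Finset.sum_le_sum fun k _ => hterm k
      _ = K * ∑ k ∈ A, q ^ norm1Vec k := (Finset.mul_sum _ _ _).symm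
      _ ≤ K * (2 : ℝ) ^ (8 * s * m * D) := by
          gcongr
          exact (sum_vec_le q hq0.le hq1 A).trans hexp
      _ = _ := by
          rw [hK, ← Real.rpow_add (by norm_num), hLδ]
          congr 1; ring
  exact ⟨summable_of_sum_le hnn hsum, Real.tsum_le_of_sum_le hnn hsum⟩

end MedianQMC
end
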